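/- Let E_4' ∈ ℝ^{4×2} be the matrix with rows (−1, 0), (cos(2π/3), sin(2π/3)), √(2·sin(π/12))·(cos(3π/8), sin(3π/8)), and √(2·sin(π/12))·(cos(7π/24), sin(7π/24)). Then β_{E_4'} = min{β_M : M ∈ ℝ^{4×2}} = √(1 + √2/2 + √6/2) ≈ 1.71, while the harmonic frame E_4 satisfies β_{E_4} = √(2 + √2) ≈ 1.84 > β_{E_4'}. -/

import Mathlib

noncomputable section

open Real
open scoped RealInnerProductSpace ENNReal

/-- ℝ² as a Euclidean space. -/
abbrev E2 : Type := EuclideanSpace ℝ (Fin 2)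

/-- The vector `(x, y)` in ℝ². -/
def vec2 (x y : ℝ) : E2 := (WithLp.equiv 2 (Fin 2 → ℝ)).symm ![x, y]

/-- The coordinates of a vector in ℝ². -/
def toFun2 (v : E2) : Fin 2 → ℝ := WithLp.equiv 2 (Fin 2 → ℝ) v

/-- The phaseless measurement map `Φ_A(x) = (|⟨a_j, x⟩|)_j`. -/
def PhiMap {m : ℕ} (a : Fin m → E2) (x : E2) : EuclideanSpace ℝ (Fin m) :=
  (WithLp.equiv 2 (Fin m → ℝ)).symm fun j => |⟪a j, x⟫|

/-- The distance `dist(x,y) = min ‖x − y‖ ‖x + y‖` (real phase retrieval distance). -/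
def pdist (x y : E2) : ℝ := min ‖x - y‖ ‖x + y‖

/-- The set of Lipschitz ratios of the phaseless measurement map. -/
def ratioSet {m : ℕ} (a : Fin m → E2) : Set ℝ :=
  {r | ∃ x y : E2, pdist x y ≠ 0 ∧ r = ‖PhiMap a x - PhiMap a y‖ / pdist x y}

/-- The optimal lower Lipschitz constant `L_A`. -/
def lipL {m : ℕ} (a : Fin m → E2) : ℝ := sInf (ratioSet a)

/-- The optimal upper Lipschitz constant `U_A`. -/
def lipU {m : ℕ} (a : Fin m → E2) : ℝ := sSup (ratioSet a)

/-- The condition number `β_A = U_A / L_A`, with `β_A = +∞` when `L_A = 0`. -/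
def condNum {m : ℕ} (a : Fin m → E2) : ℝ≥0∞ :=
  if lipL a = 0 then ⊤ else ENNReal.ofReal (lipU a / lipL a)

/-- An edge family: nonzero vectors with pairwise distinct directions summing to zero
(the edge vectors of a strictly convex polygon). -/
def IsEdgeFamily {m : ℕ} (e : Fin m → E2) : Prop :=
  (∀ j, e j ≠ 0) ∧
  (∀ i j : Fin m, i ≠ j → ‖e i‖⁻¹ • e i ≠ ‖e j‖⁻¹ • e j) ∧
  ∑ j, e j = 0

/-- The diameter-to-perimeter ratio of the polygon with edge vectors `e`. -/
def rRatio {m : ℕ} (e : Fin m → E2) : ℝ :=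
  sSup {s | ∃ u : E2, ‖u‖ = 1 ∧ s = ∑ j, |⟪e j, u⟫|} / (2 * ∑ j, ‖e j‖)

/-- An optimal edge family: minimizes `rRatio` among all edge families of size `m`. -/
def IsOptimalEdgeFamily {m : ℕ} (e : Fin m → E2) : Prop :=
  IsEdgeFamily e ∧ ∀ e' : Fin m → E2, IsEdgeFamily e' → rRatio e ≤ rRatio e'

/-- The complex square map on ℝ² ≅ ℂ: `f(t·(cos φ, sin φ)) = t²·(cos 2φ, sin 2φ)`. -/
def csq (v : E2) : E2 :=
  vec2 (toFun2 v 0 ^ 2 - toFun2 v 1 ^ 2) (2 * toFun2 v 0 * toFun2 v 1)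

/-- The harmonic frame `E_m`: the `j`-th row is `(cos((j−1)π/m), sin((j−1)π/m))`, `j = 1,…,m`. -/
def harmonicFrame (m : ℕ) : Fin m → E2 :=
  fun j => vec2 (Real.cos ((j : ℕ) * π / m)) (Real.sin ((j : ℕ) * π / m))


/-- The frame `E_4'` from the paper: rows `(−1,0)`, `(cos(2π/3), sin(2π/3))`,
`√(2 sin(π/12))·(cos(3π/8), sin(3π/8))`, `√(2 sin(π/12))·(cos(7π/24), sin(7π/24))`. -/
def E4' : Fin 4 → E2 :=
  ![vec2 (-1) 0,
    vec2 (Real.cos (2 * π / 3)) (Real.sin (2 * π / 3)),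
    Real.sqrt (2 * Real.sin (π / 12)) • vec2 (Real.cos (3 * π / 8)) (Real.sin (3 * π / 8)),
    Real.sqrt (2 * Real.sin (π / 12)) • vec2 (Real.cos (7 * π / 24)) (Real.sin (7 * π / 24))]

/-!
Complex squaring turns `⟪a, u⟫²` into an affine function of `csq u`, so for a tight frame the
square of the condition number is `P / (P - 2 * D)`, where `P` and `D` are the perimeter and the
diameter of the polygon whose edges are the vectors `csq (a j)`. An arbitrary frame becomes tight
after a linear change of variables, which does not increase the condition number. The lower bound
for four vectors is therefore the isodiametric inequality for the perimeter of quadrilaterals: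
diameter `1` forces perimeter at most `2 + 4 * sin (π / 12)`.

For that inequality, the perimeter is a convex function of the position of a diagonal sliding along
itself, so one may assume that some side `AB` has length `1`. If the angle at `A` or at `B` is at
most `π / 3`, pushing the other vertices onto a unit circle splits that angle into two chords.
Otherwise the sides `AC` and `BD` of the triangles over `AB` can be prolonged to length `1`, which
leaves a trigonometric inequality in the angles `∠ BAC` and `∠ ABD`.
-/

section Trigonometry

lemma sqrt_six_eq_sqrt_two_mul_sqrt_three : √6 = √2 * √3 := by
  rw [← sqrt_mul zero_le_two]
  norm_num

lemma sin_pi_div_twelve : sin (π / 12) = (√6 - √2) / 4 := by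
  rw [show π / 12 = π / 3 - π / 4 by ring, sin_sub, sin_pi_div_three, cos_pi_div_four,
    cos_pi_div_three, sin_pi_div_four, sqrt_six_eq_sqrt_two_mul_sqrt_three]
  ring

lemma one_fourth_le_sin_pi_div_twelve : 1 / 4 ≤ sin (π / 12) := by
  have h2 : √2 < 1.42 := (sqrt_lt' (by norm_num)).2 (by norm_num)
  have h6 : 2.44 ≤ √6 := le_sqrt_of_sq_le (by norm_num)
  rw [sin_pi_div_twelve]
  linarith

lemma sin_half_add_sin_half_le {a b : ℝ} (ha : 0 ≤ a) (hb : 0 ≤ b) (hab : a + b ≤ π / 3) :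
    2 * sin (a / 2) + 2 * sin (b / 2) ≤ 4 * sin (π / 12) := by
  have hpi := pi_pos
  have hsum : sin ((a + b) / 4) ≤ sin (π / 12) :=
    sin_le_sin_of_le_of_le_pi_div_two (by linarith) (by linarith) (by linarith)
  have hnonneg : 0 ≤ sin ((a + b) / 4) :=
    sin_nonneg_of_nonneg_of_le_pi (by linarith) (by linarith)
  calc 2 * sin (a / 2) + 2 * sin (b / 2)
      = 4 * (sin ((a + b) / 4) * cos ((a - b) / 4)) := by
        rw [← mul_add, sin_add_sin]; ring_nf
    _ ≤ 4 * sin ((a + b) / 4) := by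
        gcongr; exact mul_le_of_le_one_right hnonneg (cos_le_one _)
    _ ≤ 4 * sin (π / 12) := by gcongr

/-- The side `CD` of a quadrilateral `ABCD` in which the sides and diagonals `AB`, `AC`, `BD` have
length `1`, as a function of the angles `a = ∠ BAC` and `b = ∠ ABD`; it is the absolute value of
the complex number `exp (i a) + exp (-i b) - 1`. -/
def oppositeSide (a b : ℝ) : ℝ := √(3 + 2 * cos (a + b) - 2 * cos a - 2 * cos b)

lemma oppositeSide_nonneg (a b : ℝ) : 0 ≤ oppositeSide a b := sqrt_nonneg _

lemma oppositeSide_comm (a b : ℝ) : oppositeSide a b = oppositeSide b a := by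
  simp only [oppositeSide, add_comm a b, sub_right_comm]

lemma oppositeSide_sq (a b : ℝ) :
    oppositeSide a b ^ 2 = 3 + 2 * cos (a + b) - 2 * cos a - 2 * cos b := by
  have hnorm : 3 + 2 * cos (a + b) - 2 * cos a - 2 * cos b
      = (cos a + cos b - 1) ^ 2 + (sin a - sin b) ^ 2 := by
    rw [cos_add]
    linear_combination -(sin_sq_add_cos_sq a) - sin_sq_add_cos_sq b
  rw [oppositeSide, sq_sqrt (hnorm ▸ by positivity)]

lemma oppositeSide_add_sub_sq (s t : ℝ) :
    oppositeSide (s + t) (s - t) ^ 2 = (2 * cos s + 1) ^ 2 - 8 * cos s * cos (t / 2) ^ 2 := by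
  have ht : 2 * cos (t / 2) ^ 2 = 1 + cos t := by rw [cos_sq]; ring_nf
  rw [oppositeSide_sq, show s + t + (s - t) = 2 * s by ring, cos_two_mul, cos_add, cos_sub]
  linear_combination 4 * cos s * ht

lemma oppositeSide_add_sub_le_one {s t : ℝ} (ht : 0 ≤ t) (hts : t ≤ s) (hs : s ≤ π / 2) :
    oppositeSide (s + t) (s - t) ≤ 1 := by
  have hcos : cos s ≤ cos t := cos_le_cos_of_nonneg_of_le_pi ht (by linarith [pi_pos]) hts
  have hcos_nonneg : 0 ≤ cos s := cos_nonneg_of_neg_pi_div_two_le_of_le (by linarith) hs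
  have ht2 : 2 * cos (t / 2) ^ 2 = 1 + cos t := by rw [cos_sq]; ring_nf
  rw [← sq_le_one_iff₀ (oppositeSide_nonneg _ _), oppositeSide_add_sub_sq]
  nlinarith [mul_le_mul_of_nonneg_left hcos hcos_nonneg]

lemma oppositeSide_of_add_eq_pi_div_three {s t : ℝ} (hst : s + t = π / 3) (ht : 0 ≤ t)
    (ht' : t ≤ π) : oppositeSide (s + t) (s - t) = 2 * sin t := by
  have hsin : 0 ≤ sin t := sin_nonneg_of_nonneg_of_le_pi ht ht'
  have hcos : cos (2 * s) + cos (2 * t) = cos (s - t) := by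
    rw [cos_add_cos, ← mul_add, hst, ← mul_sub, mul_div_cancel_left₀ _ two_ne_zero,
      mul_div_cancel_left₀ _ two_ne_zero, cos_pi_div_three]
    ring
  rw [← sq_eq_sq₀ (oppositeSide_nonneg _ _) (by positivity), oppositeSide_sq, mul_pow,
    sin_sq_eq_half_sub, hst, cos_pi_div_three, show π / 3 + (s - t) = 2 * s by linarith]
  linear_combination 2 * hcos

/-- The total length of the sides `BC`, `CD`, `DA` of the quadrilateral of `oppositeSide`. -/
def threeSides (a b : ℝ) : ℝ := 2 * sin (a / 2) + 2 * sin (b / 2) + oppositeSide a b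

lemma threeSides_comm (a b : ℝ) : threeSides a b = threeSides b a := by
  simp only [threeSides, oppositeSide_comm a b, add_comm (2 * sin (a / 2))]

lemma threeSides_add_sub (s t : ℝ) :
    threeSides (s + t) (s - t) = 4 * sin (s / 2) * cos (t / 2) + oppositeSide (s + t) (s - t) := by
  rw [threeSides, ← mul_add, sin_add_sin]
  ring_nf

lemma two_mul_cos_sub_cos_le_oppositeSide_sub {s t₁ t₂ : ℝ} (ht₁ : 0 ≤ t₁) (ht : t₁ ≤ t₂)
    (hts : t₂ ≤ s) (hs : s ≤ π / 3) :
    2 * (cos (t₁ / 2) - cos (t₂ / 2)) ≤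
      oppositeSide (s + t₂) (s - t₂) - oppositeSide (s + t₁) (s - t₁) := by
  have hpi := pi_pos
  have hcos_s : 1 / 2 ≤ cos s := by
    rw [← cos_pi_div_three]
    exact cos_le_cos_of_nonneg_of_le_pi (by linarith) (by linarith) hs
  have hcos₂ : 1 / 2 ≤ cos (t₂ / 2) := by
    rw [← cos_pi_div_three]
    exact cos_le_cos_of_nonneg_of_le_pi (by linarith) (by linarith) (by linarith)
  have hcos : cos (t₂ / 2) ≤ cos (t₁ / 2) :=
    cos_le_cos_of_nonneg_of_le_pi (by linarith) (by linarith) (by linarith)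
  have hR₁ : oppositeSide (s + t₁) (s - t₁) ≤ 1 :=
    oppositeSide_add_sub_le_one ht₁ (ht.trans hts) (by linarith)
  have hR₂ : oppositeSide (s + t₂) (s - t₂) ≤ 1 :=
    oppositeSide_add_sub_le_one (ht₁.trans ht) hts (by linarith)
  have hR_sq : 4 * (cos (t₁ / 2) - cos (t₂ / 2)) ≤
      oppositeSide (s + t₂) (s - t₂) ^ 2 - oppositeSide (s + t₁) (s - t₁) ^ 2 := by
    have h : 1 * 1 ≤ 2 * cos s * (cos (t₁ / 2) + cos (t₂ / 2)) :=
      mul_le_mul (by linarith) (by linarith) zero_le_one (by linarith)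
    rw [oppositeSide_add_sub_sq, oppositeSide_add_sub_sq]
    linarith [mul_le_mul_of_nonneg_left h (sub_nonneg.2 hcos)]
  have hR : oppositeSide (s + t₁) (s - t₁) ≤ oppositeSide (s + t₂) (s - t₂) :=
    (sq_le_sq₀ (oppositeSide_nonneg _ _) (oppositeSide_nonneg _ _)).1 (by linarith)
  linarith [mul_le_mul_of_nonneg_left (add_le_add hR₂ hR₁) (sub_nonneg.2 hR)]

lemma threeSides_add_sub_le_of_le {s t₁ t₂ : ℝ} (ht₁ : 0 ≤ t₁) (ht : t₁ ≤ t₂) (hts : t₂ ≤ s)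
    (hs : s ≤ π / 3) : threeSides (s + t₁) (s - t₁) ≤ threeSides (s + t₂) (s - t₂) := by
  have hpi := pi_pos
  have hsin : sin (s / 2) ≤ 1 / 2 := by
    rw [← sin_pi_div_six]
    exact sin_le_sin_of_le_of_le_pi_div_two (by linarith) (by linarith) (by linarith)
  have hcos : cos (t₂ / 2) ≤ cos (t₁ / 2) :=
    cos_le_cos_of_nonneg_of_le_pi (by linarith) (by linarith) (by linarith)
  rw [threeSides_add_sub, threeSides_add_sub]
  linarith [mul_le_mul_of_nonneg_right hsin (sub_nonneg.2 hcos),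
    two_mul_cos_sub_cos_le_oppositeSide_sub ht₁ ht hts hs]

lemma threeSides_of_add_eq_pi_div_three {s t : ℝ} (hst : s + t = π / 3) (ht : 0 ≤ t)
    (ht' : t ≤ π) : threeSides (s + t) (s - t) = 1 + 4 * sin (π / 12) * cos (s - π / 4) := by
  have hprod : 2 * sin (s / 2) * cos (t / 2) = 1 / 2 + sin (s - π / 6) := by
    rw [two_mul_sin_mul_cos, ← sin_pi_div_six, add_comm]
    congr 2 <;> linarith
  have hsum : sin (s - π / 6) + sin t = 2 * sin (π / 12) * cos (s - π / 4) := by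
    rw [sin_add_sin]
    congr 3 <;> linarith
  rw [threeSides_add_sub, oppositeSide_of_add_eq_pi_div_three hst ht ht']
  linear_combination 2 * hprod + 2 * hsum

lemma threeSides_add_sub_le {s t : ℝ} (ht : 0 ≤ t) (hts : t ≤ s) (hst : s + t ≤ π / 3) :
    threeSides (s + t) (s - t) ≤ 1 + 4 * sin (π / 12) := by
  have hpi := pi_pos
  rcases le_total s (π / 6) with hs | hs
  · have hsin : sin (s / 2) ≤ sin (π / 12) :=
      sin_le_sin_of_le_of_le_pi_div_two (by linarith) (by linarith) (by linarith)
    have hsin_nonneg : 0 ≤ sin (s / 2) :=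
      sin_nonneg_of_nonneg_of_le_pi (by linarith) (by linarith)
    rw [threeSides_add_sub]
    linarith [oppositeSide_add_sub_le_one ht hts (by linarith),
      mul_le_of_le_one_right hsin_nonneg (cos_le_one (t / 2))]
  · calc threeSides (s + t) (s - t)
        ≤ threeSides (s + (π / 3 - s)) (s - (π / 3 - s)) :=
          threeSides_add_sub_le_of_le ht (by linarith) (by linarith) (by linarith)
      _ = 1 + 4 * sin (π / 12) * cos (s - π / 4) :=
          threeSides_of_add_eq_pi_div_three (by ring) (by linarith) (by linarith)
      _ ≤ 1 + 4 * sin (π / 12) := by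
          have hsin : 0 ≤ 4 * sin (π / 12) := by linarith [one_fourth_le_sin_pi_div_twelve]
          linarith [mul_le_of_le_one_right hsin (cos_le_one (s - π / 4))]

lemma threeSides_le {a b : ℝ} (ha : 0 ≤ a) (ha' : a ≤ π / 3) (hb : 0 ≤ b) (hb' : b ≤ π / 3) :
    threeSides a b ≤ 1 + 4 * sin (π / 12) := by
  wlog hab : b ≤ a generalizing a b
  · rw [threeSides_comm]
    exact this hb hb' ha ha' (le_of_not_ge hab)
  have h := threeSides_add_sub_le (s := (a + b) / 2) (t := (a - b) / 2)
    (by linarith) (by linarith) (by linarith)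
  rwa [show (a + b) / 2 + (a - b) / 2 = a by ring, show (a + b) / 2 - (a - b) / 2 = b by ring] at h

end Trigonometry

section Triangles

open EuclideanGeometry

variable {V : Type*} [NormedAddCommGroup V] [InnerProductSpace ℝ V] {A B C D D' O : V}

lemma dist_add_dist_le_of_wbtw (hO : Wbtw ℝ A O C) (hD : Wbtw ℝ O D D') :
    dist D A + dist D C ≤ dist D' A + dist D' C := by
  have hconvex : ConvexOn ℝ Set.univ fun X : V => dist X A + dist X C :=
    (convexOn_univ_dist A).add (convexOn_univ_dist C)
  have hmax := hconvex.le_max_of_mem_segment (Set.mem_univ O) (Set.mem_univ D')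
    (mem_segment_iff_wbtw.2 hD)
  have hOD' : dist O A + dist O C ≤ dist D' A + dist D' C := by
    rw [dist_comm O A, hO.dist_add_dist, dist_comm D' A]
    exact dist_triangle A D' C
  rwa [max_eq_right hOD'] at hmax

lemma exists_wbtw_dist_eq {r : ℝ} (hne : A ≠ B) (hr : dist A B ≤ r) :
    ∃ C, Wbtw ℝ A B C ∧ dist A C = r := by
  have hpos : 0 < dist A B := dist_pos.2 hne
  have hr_pos : 0 < r := hpos.trans_le hr
  refine ⟨AffineMap.lineMap A B (r / dist A B), ?_, ?_⟩
  · exact wbtw_iff_left_eq_or_right_mem_image_Ici.2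
      (.inr ⟨_, (one_le_div₀ hpos).2 hr, rfl⟩)
  · rw [dist_left_lineMap, Real.norm_of_nonneg (by positivity), div_mul_cancel₀ _ hpos.ne']

lemma dist_eq_two_mul_sin_half_angle {r : ℝ} (hA : dist B A = r) (hC : dist B C = r) :
    dist A C = 2 * r * sin (∠ A B C / 2) := by
  have hr : 0 ≤ r := hA ▸ dist_nonneg
  have hsin : 0 ≤ sin (∠ A B C / 2) := sin_nonneg_of_nonneg_of_le_pi
    (by linarith [angle_nonneg A B C]) (by linarith [angle_nonneg A B C, angle_le_pi A B C])
  have hcos : cos (∠ A B C) = 1 - 2 * sin (∠ A B C / 2) ^ 2 := by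
    rw [sin_sq_eq_half_sub]; ring_nf
  rw [← sq_eq_sq₀ dist_nonneg (by positivity), sq, law_cos A B C, dist_comm A, dist_comm C, hA, hC,
    hcos]
  ring

lemma angle_le_pi_div_three_of_dist_le (hne : A ≠ B) (hA : dist A C ≤ dist A B)
    (hB : dist B C ≤ dist A B) : ∠ B A C ≤ π / 3 ∨ ∠ A B C ≤ π / 3 := by
  by_contra! hangle
  have half_lt : ∀ {θ : ℝ}, π / 3 < θ → θ ≤ π → cos θ < 1 / 2 := fun hθ hθ' => by
    rw [← cos_pi_div_three]
    exact cos_lt_cos_of_nonneg_of_le_pi (by positivity) hθ' hθ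
  have hcosA := half_lt hangle.1 (angle_le_pi B A C)
  have hcosB := half_lt hangle.2 (angle_le_pi A B C)
  have hproj : dist A B = dist A C * cos (∠ B A C) + dist B C * cos (∠ A B C) := by
    have hlawA := law_cos B A C
    have hlawB := law_cos A B C
    rw [dist_comm B A, dist_comm C A] at hlawA
    rw [dist_comm C B] at hlawB
    have hpos : dist A B ≠ 0 := dist_ne_zero.2 hne
    refine mul_left_cancel₀ hpos ?_
    linarith
  have hsum : 0 < dist A C + dist B C :=
    (dist_pos.2 hne).trans_le (dist_triangle_right A B C)
  refine lt_irrefl (dist A B) ?_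
  calc dist A B = dist A C * cos (∠ B A C) + dist B C * cos (∠ A B C) := hproj
    _ ≤ dist A C * max (cos (∠ B A C)) (cos (∠ A B C))
        + dist B C * max (cos (∠ B A C)) (cos (∠ A B C)) := by
      gcongr
      exacts [le_max_left _ _, le_max_right _ _]
    _ = (dist A C + dist B C) * max (cos (∠ B A C)) (cos (∠ A B C)) := by ring
    _ < (dist A C + dist B C) * (1 / 2) := by
      gcongr
      exact max_lt hcosA hcosB
    _ ≤ dist A B := by linarith

lemma inner_sub_sub_eq_cos_angle (hA : dist B A = 1) (hC : dist B C = 1) :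
    ⟪A - B, C - B⟫ = cos (∠ A B C) := by
  rw [← InnerProductGeometry.cos_angle_mul_norm_mul_norm, ← dist_eq_norm', hA, ← dist_eq_norm', hC,
    mul_one, mul_one]
  rfl

lemma angle_eq_angle_sub_of_wbtw (hA : Wbtw ℝ A O C) (hB : Wbtw ℝ B O D) (hOA : O ≠ A)
    (hOB : O ≠ B) : ∠ A O B = InnerProductGeometry.angle (C - A) (D - B) := by
  have ray : ∀ {X Y : V}, Wbtw ℝ X O Y → O ≠ X → ∃ r : ℝ, 0 < r ∧ X -ᵥ O = -(r • (Y - X)) := by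
    rintro X Y ⟨r, ⟨hr, -⟩, rfl⟩ hne
    refine ⟨r, hr.lt_of_ne' ?_, by simp [AffineMap.lineMap_apply_module']⟩
    rintro rfl
    simp at hne
  obtain ⟨r, hr, hr_eq⟩ := ray hA hOA
  obtain ⟨s, hs, hs_eq⟩ := ray hB hOB
  rw [EuclideanGeometry.angle, hr_eq, hs_eq, InnerProductGeometry.angle_neg_neg,
    InnerProductGeometry.angle_smul_left_of_pos _ _ hr,
    InnerProductGeometry.angle_smul_right_of_pos _ _ hs]

lemma dist_eq_oppositeSide (hA : Wbtw ℝ A O C) (hB : Wbtw ℝ B O D) (hOA : O ≠ A) (hOB : O ≠ B)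
    (hAB : dist A B = 1) (hAC : dist A C = 1) (hBD : dist B D = 1) :
    dist C D = oppositeSide (∠ B A C) (∠ A B D) := by
  have hAB_norm : ‖B - A‖ = 1 := by rw [← dist_eq_norm', hAB]
  have hAC_norm : ‖C - A‖ = 1 := by rw [← dist_eq_norm', hAC]
  have hBD_norm : ‖D - B‖ = 1 := by rw [← dist_eq_norm', hBD]
  have hinnerA : ⟪B - A, C - A⟫ = cos (∠ B A C) := inner_sub_sub_eq_cos_angle hAB hAC
  have hinnerB : ⟪B - A, D - B⟫ = -cos (∠ A B D) := by
    rw [← inner_sub_sub_eq_cos_angle (dist_comm A B ▸ hAB) hBD, ← inner_neg_left, neg_sub]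
  have hangle : ∠ A O B = π - (∠ B A C + ∠ A B D) := by
    have hne : A ≠ B := dist_ne_zero.1 (by rw [hAB]; exact one_ne_zero)
    have hsum := angle_add_angle_add_angle_eq_pi O hne.symm
    rw [hB.angle_eq_right _ hOB, angle_comm B O A, angle_comm O A B, hA.angle_eq_right _ hOA]
      at hsum
    linarith
  have hinnerO : ⟪C - A, D - B⟫ = -cos (∠ B A C + ∠ A B D) := by
    rw [← cos_pi_sub, ← hangle, angle_eq_angle_sub_of_wbtw hA hB hOA hOB,
      ← InnerProductGeometry.cos_angle_mul_norm_mul_norm, hAC_norm, hBD_norm, mul_one, mul_one]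
  have hsq : dist C D ^ 2 = oppositeSide (∠ B A C) (∠ A B D) ^ 2 := by
    rw [oppositeSide_sq, dist_eq_norm',
      show D - C = (B - A) + (D - B) - (C - A) by abel, norm_sub_sq_real, norm_add_sq_real,
      inner_add_left, hAB_norm, hAC_norm, hBD_norm, hinnerA, hinnerB, real_inner_comm, hinnerO]
    ring
  exact (sq_eq_sq₀ dist_nonneg (oppositeSide_nonneg _ _)).1 hsq

end Triangles

section Quadrilaterals

open EuclideanGeometry

/-- The perimeter of the quadrilateral `ABCD`. -/
def quadPerimeter {X : Type*} [PseudoMetricSpace X] (A B C D : X) : ℝ :=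
  dist A B + dist B C + dist C D + dist D A

lemma quadPerimeter_rotate {X : Type*} [PseudoMetricSpace X] (A B C D : X) :
    quadPerimeter B C D A = quadPerimeter A B C D := by
  simp only [quadPerimeter]; ring

lemma quadPerimeter_swap {X : Type*} [PseudoMetricSpace X] (A B C D : X) :
    quadPerimeter A D C B = quadPerimeter A B C D := by
  simp only [quadPerimeter, dist_comm A D, dist_comm D C, dist_comm C B, dist_comm B A]; ring

variable {V : Type*} [NormedAddCommGroup V] [InnerProductSpace ℝ V] {A B C D : V}

/-- `ABCD` is a (possibly degenerate) convex quadrilateral of diameter at most `1`; convexity is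
encoded by the crossing of its diagonals. -/
structure UnitDiamQuad (A B C D : V) : Prop where
  dist_AB : dist A B ≤ 1
  dist_BC : dist B C ≤ 1
  dist_CD : dist C D ≤ 1
  dist_DA : dist D A ≤ 1
  dist_AC : dist A C ≤ 1
  dist_BD : dist B D ≤ 1
  diagonals : ∃ O, Wbtw ℝ A O C ∧ Wbtw ℝ B O D

lemma convexOn_quadPerimeter_slide {V : Type*} [NormedAddCommGroup V] [NormedSpace ℝ V]
    (A B C D v : V) :
    ConvexOn ℝ Set.univ fun t : ℝ => quadPerimeter A (B + t • v) C (D + t • v) := by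
  have hdist : ∀ X Y : V, ConvexOn ℝ Set.univ fun t : ℝ => dist (X + t • v) Y := fun X Y => by
    have h := (convexOn_univ_dist Y).comp_affineMap (AffineMap.lineMap (k := ℝ) X (X + v))
    simpa [Function.comp_def, AffineMap.lineMap_apply_module', add_comm] using h
  simp only [quadPerimeter, dist_comm A, dist_comm C]
  exact (((hdist B A).add (hdist B C)).add (hdist D C)).add (hdist D A)

namespace UnitDiamQuad

lemma rotate (h : UnitDiamQuad A B C D) : UnitDiamQuad B C D A where
  dist_AB := h.dist_BC
  dist_BC := h.dist_CD
  dist_CD := h.dist_DA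
  dist_DA := h.dist_AB
  dist_AC := h.dist_BD
  dist_BD := dist_comm A C ▸ h.dist_AC
  diagonals := let ⟨O, hAC, hBD⟩ := h.diagonals; ⟨O, hBD, hAC.symm⟩

lemma swap (h : UnitDiamQuad A B C D) : UnitDiamQuad A D C B where
  dist_AB := dist_comm D A ▸ h.dist_DA
  dist_BC := dist_comm C D ▸ h.dist_CD
  dist_CD := dist_comm B C ▸ h.dist_BC
  dist_DA := dist_comm A B ▸ h.dist_AB
  dist_AC := h.dist_AC
  dist_BD := dist_comm B D ▸ h.dist_BD
  diagonals := let ⟨O, hAC, hBD⟩ := h.diagonals; ⟨O, hAC, hBD.symm⟩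

lemma perimeter_le_of_wbtw (h : UnitDiamQuad A B C D) (hB : Wbtw ℝ A B C) :
    quadPerimeter A B C D ≤ 2 + 4 * sin (π / 12) := by
  rw [quadPerimeter, hB.dist_add_dist]
  linarith [h.dist_AC, h.dist_CD, h.dist_DA, one_fourth_le_sin_pi_div_twelve]

-- Pushing `D`, then `A` and `C`, away from `B` onto the unit circle increases the perimeter.
lemma perimeter_le_of_angle_le (h : UnitDiamQuad A B C D) (hangle : ∠ A B C ≤ π / 3) :
    quadPerimeter A B C D ≤ 2 + 4 * sin (π / 12) := by
  by_cases hB : Wbtw ℝ A B C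
  · exact h.perimeter_le_of_wbtw hB
  obtain ⟨O, hAC, hBD⟩ := h.diagonals
  have hOB : O ≠ B := by rintro rfl; exact hB hAC
  have hDB : B ≠ D := by rintro rfl; exact hOB ((wbtw_self_iff ℝ).1 hBD)
  have hAB : B ≠ A := by rintro rfl; exact hB (wbtw_self_left ℝ B C)
  have hCB : B ≠ C := by rintro rfl; exact hB (wbtw_self_right ℝ A B)
  obtain ⟨A', hA', hA'_dist⟩ := exists_wbtw_dist_eq hAB (dist_comm A B ▸ h.dist_AB)
  obtain ⟨C', hC', hC'_dist⟩ := exists_wbtw_dist_eq hCB h.dist_BC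
  obtain ⟨D', hD', hD'_dist⟩ := exists_wbtw_dist_eq hDB h.dist_BD
  have hangle_add : ∠ A' B D' + ∠ C' B D' = ∠ A B C := by
    rw [← hA'.angle_eq_left _ hAB.symm, ← hC'.angle_eq_left _ hCB.symm,
      ← hD'.angle_eq_right _ hDB.symm, ← hD'.angle_eq_right _ hDB.symm,
      ← hBD.angle_eq_right _ hOB, ← hBD.angle_eq_right _ hOB, angle_comm C B O,
      angle_add_of_ne_of_ne hAB hCB hAC]
  have hchords : dist A' D' + dist C' D' ≤ 4 * sin (π / 12) := by
    rw [dist_eq_two_mul_sin_half_angle hA'_dist hD'_dist,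
      dist_eq_two_mul_sin_half_angle hC'_dist hD'_dist, mul_one]
    exact sin_half_add_sin_half_le (angle_nonneg _ _ _) (angle_nonneg _ _ _)
      (hangle_add.trans_le hangle)
  have hD_le : dist D A + dist D C ≤ dist D' A + dist D' C :=
    dist_add_dist_le_of_wbtw hAC (hD'.trans_left_right hBD)
  have hA_add := hA'.dist_add_dist
  have hC_add := hC'.dist_add_dist
  have hA_tri := dist_triangle A A' D'
  have hC_tri := dist_triangle C C' D'
  rw [dist_comm D A, dist_comm D C, dist_comm D' A, dist_comm D' C] at hD_le
  rw [quadPerimeter, dist_comm A B, dist_comm D A]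
  linarith

lemma perimeter_le_of_base_angles_le (h : UnitDiamQuad A B C D) (hAB : dist A B = 1)
    (hBAC : ∠ B A C ≤ π / 3) (hABD : ∠ A B D ≤ π / 3) :
    quadPerimeter A B C D ≤ 2 + 4 * sin (π / 12) := by
  obtain ⟨O, hAC, hBD⟩ := h.diagonals
  by_cases hOA : O = A
  · rw [quadPerimeter_rotate D A B C]
    exact h.rotate.rotate.rotate.perimeter_le_of_wbtw (hOA ▸ hBD.symm)
  by_cases hOB : O = B
  · exact h.perimeter_le_of_wbtw (hOB ▸ hAC)
  have hCA : A ≠ C := by rintro rfl; exact hOA ((wbtw_self_iff ℝ).1 hAC)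
  have hDB : B ≠ D := by rintro rfl; exact hOB ((wbtw_self_iff ℝ).1 hBD)
  obtain ⟨C', hC', hC'_dist⟩ := exists_wbtw_dist_eq hCA h.dist_AC
  obtain ⟨D', hD', hD'_dist⟩ := exists_wbtw_dist_eq hDB h.dist_BD
  have hC_le : dist C B + dist C D ≤ dist C' B + dist C' D :=
    dist_add_dist_le_of_wbtw hBD (hC'.trans_left_right hAC)
  have hD_le : dist D A + dist D C' ≤ dist D' A + dist D' C' :=
    dist_add_dist_le_of_wbtw (hC'.trans_left hAC) (hD'.trans_left_right hBD)
  have hsides : dist C' B + dist D' A + dist C' D' ≤ 1 + 4 * sin (π / 12) := by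
    have hBC' := dist_eq_two_mul_sin_half_angle hAB hC'_dist
    have hAD' := dist_eq_two_mul_sin_half_angle (dist_comm A B ▸ hAB) hD'_dist
    have hC'D' := dist_eq_oppositeSide (hC'.trans_left hAC) (hD'.trans_left hBD) hOA hOB hAB
      hC'_dist hD'_dist
    rw [← hC'.angle_eq_right _ hCA.symm, ← hD'.angle_eq_right _ hDB.symm] at hC'D'
    rw [← hC'.angle_eq_right _ hCA.symm] at hBC'
    rw [← hD'.angle_eq_right _ hDB.symm] at hAD'
    have hthree := threeSides_le (angle_nonneg B A C) hBAC (angle_nonneg A B D) hABD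
    rw [threeSides] at hthree
    rw [dist_comm C' B, dist_comm D' A, hBC', hAD', hC'D']
    linarith
  rw [dist_comm D C', dist_comm D' C'] at hD_le
  rw [quadPerimeter, hAB, dist_comm B C]
  linarith

lemma perimeter_le_of_dist_AB_eq_one (h : UnitDiamQuad A B C D) (hAB : dist A B = 1) :
    quadPerimeter A B C D ≤ 2 + 4 * sin (π / 12) := by
  rcases le_or_gt (∠ A B C) (π / 3) with hABC | hABC
  · exact h.perimeter_le_of_angle_le hABC
  rcases le_or_gt (∠ B A D) (π / 3) with hBAD | hBAD
  · rw [quadPerimeter_rotate D A B C]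
    exact h.rotate.rotate.rotate.perimeter_le_of_angle_le (angle_comm B A D ▸ hBAD)
  have hne : A ≠ B := dist_ne_zero.1 (by rw [hAB]; exact one_ne_zero)
  have hBAC : ∠ B A C ≤ π / 3 :=
    (angle_le_pi_div_three_of_dist_le hne (hAB.symm ▸ h.dist_AC)
      (hAB.symm ▸ h.dist_BC)).resolve_right hABC.not_ge
  have hABD : ∠ A B D ≤ π / 3 :=
    (angle_le_pi_div_three_of_dist_le hne (hAB.symm ▸ dist_comm D A ▸ h.dist_DA)
      (hAB.symm ▸ h.dist_BD)).resolve_left hBAD.not_ge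
  exact h.perimeter_le_of_base_angles_le hAB hBAC hABD

lemma perimeter_le_of_side_eq_one (h : UnitDiamQuad A B C D)
    (hside : max (max (dist A B) (dist B C)) (max (dist C D) (dist D A)) = 1) :
    quadPerimeter A B C D ≤ 2 + 4 * sin (π / 12) := by
  obtain hAB | hBC | hCD | hDA : dist A B = 1 ∨ dist B C = 1 ∨ dist C D = 1 ∨ dist D A = 1 := by
    rcases max_choice (max (dist A B) (dist B C)) (max (dist C D) (dist D A)) with h' | h' <;>
      rw [h'] at hside
    · rcases max_choice (dist A B) (dist B C) with h' | h' <;> rw [h'] at hside <;> tauto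
    · rcases max_choice (dist C D) (dist D A) with h' | h' <;> rw [h'] at hside <;> tauto
  · exact h.perimeter_le_of_dist_AB_eq_one hAB
  · rw [← quadPerimeter_rotate]
    exact h.rotate.perimeter_le_of_dist_AB_eq_one hBC
  · rw [← quadPerimeter_rotate, ← quadPerimeter_rotate]
    exact h.rotate.rotate.perimeter_le_of_dist_AB_eq_one hCD
  · rw [quadPerimeter_rotate D A B C]
    exact h.rotate.rotate.rotate.perimeter_le_of_dist_AB_eq_one hDA

-- Slide the diagonal `BD` along itself until a side has length `1` or `B` reaches `AC`.
lemma exists_slide_perimeter_le (h : UnitDiamQuad A B C D) : ∃ t : ℝ, 0 ≤ t ∧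
    quadPerimeter A (B + t • (D - B)) C (D + t • (D - B)) ≤ 2 + 4 * sin (π / 12) := by
  obtain ⟨O, hAC, θ, ⟨hθ, hθ'⟩, rfl⟩ := h.diagonals
  let longest (t : ℝ) : ℝ :=
    max (max (dist A (B + t • (D - B))) (dist (B + t • (D - B)) C))
      (max (dist C (D + t • (D - B))) (dist (D + t • (D - B)) A))
  have hcontinuous : Continuous longest := by fun_prop
  have hslide : ∀ t, 0 ≤ t → t ≤ θ → longest t ≤ 1 →
      UnitDiamQuad A (B + t • (D - B)) C (D + t • (D - B)) := by
    intro t ht htθ hlongest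
    simp only [longest, max_le_iff] at hlongest
    obtain ⟨⟨hAB, hBC⟩, hCD, hDA⟩ := hlongest
    refine ⟨hAB, hBC, hCD, hDA, h.dist_AC, by simpa using h.dist_BD, _, hAC, θ - t, ?_, ?_⟩
    · constructor <;> linarith
    · simp only [AffineMap.lineMap_apply_module']
      module
  rcases le_or_gt (longest θ) 1 with hlongest | hlongest
  · refine ⟨θ, hθ, (hslide θ hθ le_rfl hlongest).perimeter_le_of_wbtw ?_⟩
    rwa [AffineMap.lineMap_apply_module', add_comm] at hAC
  · have hzero : longest 0 ≤ 1 := by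
      simp [longest, h.dist_AB, h.dist_BC, h.dist_CD, h.dist_DA]
    obtain ⟨t, ⟨ht, htθ⟩, hone⟩ := intermediate_value_Icc hθ hcontinuous.continuousOn
      ⟨hzero, hlongest.le⟩
    exact ⟨t, ht, (hslide t ht htθ hone.le).perimeter_le_of_side_eq_one hone⟩

lemma perimeter_le (h : UnitDiamQuad A B C D) :
    quadPerimeter A B C D ≤ 2 + 4 * sin (π / 12) := by
  obtain ⟨t, ht, ht_le⟩ := h.exists_slide_perimeter_le
  obtain ⟨s, hs, hs_le⟩ := h.swap.exists_slide_perimeter_le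
  have hmem : (0 : ℝ) ∈ segment ℝ (-s) t := by
    rw [segment_eq_Icc (by linarith)]
    constructor <;> linarith
  have hmax := (convexOn_quadPerimeter_slide A B C D (D - B)).le_max_of_mem_segment
    (Set.mem_univ _) (Set.mem_univ _) hmem
  have hneg : ∀ X : V, X + -s • (D - B) = X + s • (B - D) := fun X => by module
  rw [hneg, hneg, ← quadPerimeter_swap A (B + s • (B - D))] at hmax
  simpa using hmax.trans (max_le hs_le ht_le)

end UnitDiamQuad

end Quadrilaterals

section PolygonEdges

variable {V : Type*} [NormedAddCommGroup V] [InnerProductSpace ℝ V]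

lemma unitDiamQuad_of_sum_smul_eq_zero {b : Fin 4 → V} (hb : ∑ i, b i = 0)
    (hsum : ∀ S : Finset (Fin 4), ‖∑ i ∈ S, b i‖ ≤ 1) {w : Fin 4 → ℝ}
    (hw : ∑ i, w i • b i = 0) (h10 : w 1 ≤ w 0) (h12 : w 1 ≤ w 2) (h30 : w 3 ≤ w 0)
    (h32 : w 3 ≤ w 2) (hlt : w 1 + w 3 < w 0 + w 2) :
    UnitDiamQuad 0 (b 0) (b 0 + b 1) (b 0 + b 1 + b 2) := by
  have hgap : 0 < w 0 + w 2 - w 1 - w 3 := by linarith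
  set G := w 0 + w 2 - w 1 - w 3 with hG
  set s := (w 2 - w 1) / G
  set t := (w 2 - w 3) / G
  have hs : G * s = w 2 - w 1 := mul_div_cancel₀ _ hgap.ne'
  have ht : G * t = w 2 - w 3 := mul_div_cancel₀ _ hgap.ne'
  have hs_mem : s ∈ Set.Icc (0 : ℝ) 1 :=
    ⟨div_nonneg (by linarith) hgap.le, div_le_one_of_le₀ (by linarith) hgap.le⟩
  have ht_mem : t ∈ Set.Icc (0 : ℝ) 1 :=
    ⟨div_nonneg (by linarith) hgap.le, div_le_one_of_le₀ (by linarith) hgap.le⟩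
  rw [Fin.sum_univ_four] at hb hw
  have hb3 : b 3 = -(b 0 + b 1 + b 2) := eq_neg_of_add_eq_zero_right hb
  have hcross : s • (b 0 + b 1) = b 0 + t • (b 1 + b 2) := by
    have hscaled : G • (s • (b 0 + b 1) - (b 0 + t • (b 1 + b 2))) = 0 := by
      rw [hb3] at hw
      calc G • (s • (b 0 + b 1) - (b 0 + t • (b 1 + b 2)))
          = (G * s) • (b 0 + b 1) - G • b 0 - (G * t) • (b 1 + b 2) := by module
        _ = -(w 0 • b 0 + w 1 • b 1 + w 2 • b 2 + w 3 • -(b 0 + b 1 + b 2)) := by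
            rw [hs, ht, hG]; module
        _ = 0 := by rw [hw, neg_zero]
    exact sub_eq_zero.1 ((smul_eq_zero_iff_right hgap.ne').1 hscaled)
  refine ⟨?_, ?_, ?_, ?_, ?_, ?_, s • (b 0 + b 1), ⟨s, hs_mem, ?_⟩, ⟨t, ht_mem, ?_⟩⟩
  · simpa using hsum {0}
  · simpa using hsum {1}
  · simpa using hsum {2}
  · rw [dist_zero_right, ← norm_neg, ← hb3]
    simpa using hsum {3}
  · simpa using hsum {0, 1}
  · simpa [dist_eq_norm, add_assoc, ← norm_neg (b 1 + b 2)] using hsum {1, 2}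
  · simp [AffineMap.lineMap_apply_module']
  · rw [hcross, AffineMap.lineMap_apply_module']
    module

lemma exists_perm_alternating {w : Fin 4 → ℝ} (hw : ∃ i j, w i ≠ w j) :
    ∃ σ : Equiv.Perm (Fin 4), w (σ 1) ≤ w (σ 0) ∧ w (σ 1) ≤ w (σ 2) ∧ w (σ 3) ≤ w (σ 0) ∧
      w (σ 3) ≤ w (σ 2) ∧ w (σ 1) + w (σ 3) < w (σ 0) + w (σ 2) := by
  set τ := Tuple.sort w
  have hmono : Monotone (w ∘ τ) := Tuple.monotone_sort w
  have h01 : w (τ 0) ≤ w (τ 1) := hmono (by decide)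
  have h12 : w (τ 1) ≤ w (τ 2) := hmono (by decide)
  have h23 : w (τ 2) ≤ w (τ 3) := hmono (by decide)
  have h03 : w (τ 0) < w (τ 3) := by
    by_contra! hle
    have hconst : ∀ i, w i = w (τ 0) := fun i => by
      have hlower : w (τ 0) ≤ w (τ (τ.symm i)) := hmono (Fin.zero_le _)
      have hupper : w (τ (τ.symm i)) ≤ w (τ 3) := hmono (Fin.le_last _)
      rw [τ.apply_symm_apply] at hlower hupper
      linarith
    obtain ⟨i, j, hij⟩ := hw
    exact hij ((hconst i).trans (hconst j).symm)
  have h1 : Equiv.swap (0 : Fin 4) 3 1 = 1 := by decide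
  have h2 : Equiv.swap (0 : Fin 4) 3 2 = 2 := by decide
  refine ⟨(Equiv.swap 0 3).trans τ, ?_⟩
  simp only [Equiv.trans_apply, Equiv.swap_apply_left, Equiv.swap_apply_right, h1, h2]
  refine ⟨?_, ?_, ?_, ?_, ?_⟩ <;> linarith

variable [FiniteDimensional ℝ V]

open Module in
lemma exists_sum_smul_eq_zero_of_finrank_le_two (hV : finrank ℝ V ≤ 2) (b : Fin 4 → V) :
    ∃ w : Fin 4 → ℝ, ∑ i, w i • b i = 0 ∧ ∃ i j, w i ≠ w j := by
  obtain ⟨w, hw, i, hi⟩ : ∃ w : Fin 3 → ℝ, ∑ i, w i • b i.castSucc = 0 ∧ ∃ i, w i ≠ 0 := by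
    have hdep : ¬ LinearIndependent ℝ fun i : Fin 3 => b i.castSucc := fun h => by
      have hcard := h.fintype_card_le_finrank
      rw [Fintype.card_fin] at hcard
      omega
    simpa [Fintype.not_linearIndependent_iff] using hdep
  exact ⟨Fin.snoc w 0, by
      simpa only [Fin.sum_univ_castSucc, Fin.snoc_castSucc, Fin.snoc_last, zero_smul, add_zero]
        using hw,
    i.castSucc, Fin.last 3, by rwa [Fin.snoc_castSucc, Fin.snoc_last]⟩

lemma sum_norm_le_of_norm_sum_le_one (hV : Module.finrank ℝ V ≤ 2) {b : Fin 4 → V}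
    (hb : ∑ i, b i = 0) (hsum : ∀ S : Finset (Fin 4), ‖∑ i ∈ S, b i‖ ≤ 1) :
    ∑ i, ‖b i‖ ≤ 2 + 4 * sin (π / 12) := by
  obtain ⟨w, hw, hne⟩ := exists_sum_smul_eq_zero_of_finrank_le_two hV b
  obtain ⟨σ, h10, h12, h30, h32, hlt⟩ := exists_perm_alternating hne
  have hbσ : ∑ i, b (σ i) = 0 := (Equiv.sum_comp σ b).trans hb
  have hquad := unitDiamQuad_of_sum_smul_eq_zero hbσ
    (fun S => by simpa using hsum (S.map σ.toEmbedding))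
    ((Equiv.sum_comp σ fun i => w i • b i).trans hw) h10 h12 h30 h32 hlt
  have hlast : ‖b (σ 3)‖ = ‖b (σ 0) + b (σ 1) + b (σ 2)‖ := by
    rw [Fin.sum_univ_four] at hbσ
    rw [eq_neg_of_add_eq_zero_right hbσ, norm_neg]
  rw [← Equiv.sum_comp σ]
  simpa [quadPerimeter, Fin.sum_univ_four, hlast] using hquad.perimeter_le

lemma exists_sum_norm_le_mul_norm_sum (hV : Module.finrank ℝ V ≤ 2) {b : Fin 4 → V}
    (hb : ∑ i, b i = 0) :
    ∃ S : Finset (Fin 4), ∑ i, ‖b i‖ ≤ (2 + 4 * sin (π / 12)) * ‖∑ i ∈ S, b i‖ := by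
  obtain ⟨S, hS⟩ := Finite.exists_max fun S : Finset (Fin 4) => ‖∑ i ∈ S, b i‖
  refine ⟨S, ?_⟩
  rcases (norm_nonneg (∑ i ∈ S, b i)).eq_or_lt' with hzero | hpos
  · have hb0 : ∀ i, ‖b i‖ = 0 := fun i =>
      ((by simpa [hzero] using hS {i} : b i = 0) ▸ norm_zero)
    simp [hb0, hzero]
  · have hscaled := sum_norm_le_of_norm_sum_le_one hV (b := fun i => ‖∑ i ∈ S, b i‖⁻¹ • b i)
      (by rw [← Finset.smul_sum, hb, smul_zero]) fun T => by
        rw [← Finset.smul_sum, norm_smul, norm_inv, norm_norm]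
        exact inv_mul_le_one_of_le₀ (hS T) hpos.le
    simp only [norm_smul, norm_inv, norm_norm, ← Finset.mul_sum] at hscaled
    rwa [inv_mul_le_iff₀ hpos, mul_comm] at hscaled

end PolygonEdges

section LipschitzConstants

lemma abs_sub_abs_sq (p q : ℝ) : (|p| - |q|) ^ 2 = min ((p - q) ^ 2) ((p + q) ^ 2) := by
  have hexpand : (|p| - |q|) ^ 2 = p ^ 2 + q ^ 2 - 2 * |p * q| := by
    rw [abs_mul, sub_sq, sq_abs, sq_abs]; ring
  rcases le_total 0 (p * q) with hpq | hpq
  · rw [hexpand, abs_of_nonneg hpq, min_eq_left (by linarith)]; ring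
  · rw [hexpand, abs_of_nonpos hpq, min_eq_right (by linarith)]; ring

variable {m : ℕ} (a : Fin m → E2)

/-- The squared distance `‖Φ_A(x) - Φ_A(y)‖²` in the coordinates `u = x - y`, `v = x + y`. -/
def minEnergy (u v : E2) : ℝ := ∑ j, min (⟪a j, u⟫ ^ 2) (⟪a j, v⟫ ^ 2)

lemma minEnergy_nonneg (u v : E2) : 0 ≤ minEnergy a u v :=
  Finset.sum_nonneg fun _ _ => le_min (sq_nonneg _) (sq_nonneg _)

lemma minEnergy_comm (u v : E2) : minEnergy a u v = minEnergy a v u := by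
  simp only [minEnergy, min_comm]

lemma minEnergy_self (u : E2) : minEnergy a u u = ∑ j, ⟪a j, u⟫ ^ 2 := by
  simp only [minEnergy, min_self]

lemma minEnergy_le_sum_inner_sq (u v : E2) : minEnergy a u v ≤ ∑ j, ⟪a j, u⟫ ^ 2 :=
  Finset.sum_le_sum fun _ _ => min_le_left _ _

lemma norm_PhiMap_sub_sq (x y : E2) :
    ‖PhiMap a x - PhiMap a y‖ ^ 2 = minEnergy a (x - y) (x + y) := by
  simp [EuclideanSpace.real_norm_sq_eq, minEnergy, PhiMap, inner_sub_right, inner_add_right,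
    abs_sub_abs_sq]

lemma pdist_nonneg (x y : E2) : 0 ≤ pdist x y := le_min (norm_nonneg _) (norm_nonneg _)

lemma pdist_sq (x y : E2) : pdist x y ^ 2 = min (‖x - y‖ ^ 2) (‖x + y‖ ^ 2) :=
  (pow_left_monotoneOn (n := 2)).map_min (norm_nonneg _) (norm_nonneg _)

lemma pdist_ne_zero_iff {x y : E2} : pdist x y ≠ 0 ↔ x - y ≠ 0 ∧ x + y ≠ 0 := by
  rw [← (pdist_nonneg x y).lt_iff_ne', pdist, lt_min_iff, norm_pos_iff, norm_pos_iff]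

variable {a} in
lemma mem_ratioSet_iff {r : ℝ} : r ∈ ratioSet a ↔ 0 ≤ r ∧
    ∃ u v : E2, u ≠ 0 ∧ v ≠ 0 ∧ r ^ 2 * min (‖u‖ ^ 2) (‖v‖ ^ 2) = minEnergy a u v := by
  constructor
  · rintro ⟨x, y, h, rfl⟩
    obtain ⟨hsub, hadd⟩ := pdist_ne_zero_iff.1 h
    refine ⟨div_nonneg (norm_nonneg _) (pdist_nonneg _ _), x - y, x + y, hsub, hadd, ?_⟩
    rw [← pdist_sq, ← norm_PhiMap_sub_sq, div_pow, div_mul_cancel₀ _ (pow_ne_zero 2 h)]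
  · rintro ⟨hr, u, v, hu, hv, h⟩
    obtain ⟨x, y, rfl, rfl⟩ : ∃ x y, x - y = u ∧ x + y = v :=
      ⟨(1 / 2 : ℝ) • (u + v), (1 / 2 : ℝ) • (v - u), by module, by module⟩
    have hdist : pdist x y ≠ 0 := pdist_ne_zero_iff.2 ⟨hu, hv⟩
    refine ⟨x, y, hdist, (eq_div_iff hdist).2 ?_⟩
    rw [← pdist_sq, ← norm_PhiMap_sub_sq, ← mul_pow] at h
    exact (sq_eq_sq₀ (mul_nonneg hr (pdist_nonneg _ _)) (norm_nonneg _)).1 h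

lemma exists_mem_ratioSet {u v : E2} (hu : u ≠ 0) (hv : v ≠ 0) :
    ∃ r ∈ ratioSet a, r ^ 2 * min (‖u‖ ^ 2) (‖v‖ ^ 2) = minEnergy a u v := by
  have hpos : 0 < min (‖u‖ ^ 2) (‖v‖ ^ 2) := by positivity
  have hsq : √(minEnergy a u v / min (‖u‖ ^ 2) (‖v‖ ^ 2)) ^ 2 * min (‖u‖ ^ 2) (‖v‖ ^ 2) =
      minEnergy a u v := by
    rw [sq_sqrt (div_nonneg (minEnergy_nonneg _ _ _) hpos.le), div_mul_cancel₀ _ hpos.ne']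
  exact ⟨_, mem_ratioSet_iff.2 ⟨sqrt_nonneg _, u, v, hu, hv, hsq⟩, hsq⟩

lemma ratioSet_nonempty : (ratioSet a).Nonempty := by
  obtain ⟨u, hu⟩ := exists_ne (0 : E2)
  obtain ⟨r, hr, -⟩ := exists_mem_ratioSet a hu hu
  exact ⟨r, hr⟩

lemma lipL_nonneg : 0 ≤ lipL a := Real.sInf_nonneg fun _ hr => (mem_ratioSet_iff.1 hr).1

lemma lipU_nonneg : 0 ≤ lipU a := Real.sSup_nonneg fun _ hr => (mem_ratioSet_iff.1 hr).1

lemma lipL_sq_mul_le_minEnergy (u v : E2) :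
    lipL a ^ 2 * min (‖u‖ ^ 2) (‖v‖ ^ 2) ≤ minEnergy a u v := by
  rcases eq_or_ne u 0 with rfl | hu
  · simpa using minEnergy_nonneg a 0 v
  rcases eq_or_ne v 0 with rfl | hv
  · simpa using minEnergy_nonneg a u 0
  obtain ⟨r, hr, h⟩ := exists_mem_ratioSet a hu hv
  have hle : lipL a ≤ r := csInf_le ⟨0, fun _ hr => (mem_ratioSet_iff.1 hr).1⟩ hr
  rw [← h]
  exact mul_le_mul_of_nonneg_right (pow_le_pow_left₀ (lipL_nonneg a) hle 2) (by positivity)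

variable {a}

lemma sqrt_le_lipL {c : ℝ}
    (hc : ∀ u v : E2, c * min (‖u‖ ^ 2) (‖v‖ ^ 2) ≤ minEnergy a u v) : √c ≤ lipL a := by
  refine le_csInf (ratioSet_nonempty a) fun r hr => ?_
  obtain ⟨hr, u, v, hu, hv, h⟩ := mem_ratioSet_iff.1 hr
  exact sqrt_le_iff.2 ⟨hr, le_of_mul_le_mul_right (h ▸ hc u v) (by positivity)⟩

lemma le_sqrt_of_mem_ratioSet {c r : ℝ} (hc : ∀ u : E2, ∑ j, ⟪a j, u⟫ ^ 2 ≤ c * ‖u‖ ^ 2)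
    (hr : r ∈ ratioSet a) : r ≤ √c := by
  obtain ⟨-, u, v, hu, hv, h⟩ := mem_ratioSet_iff.1 hr
  refine le_sqrt_of_sq_le (le_of_mul_le_mul_right ?_ (a := min (‖u‖ ^ 2) (‖v‖ ^ 2))
    (by positivity))
  rw [h]
  rcases min_choice (‖u‖ ^ 2) (‖v‖ ^ 2) with hmin | hmin <;> rw [hmin]
  · exact (minEnergy_le_sum_inner_sq a u v).trans (hc u)
  · rw [minEnergy_comm]
    exact (minEnergy_le_sum_inner_sq a v u).trans (hc v)

lemma lipU_le_sqrt {c : ℝ} (hc : ∀ u : E2, ∑ j, ⟪a j, u⟫ ^ 2 ≤ c * ‖u‖ ^ 2) :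
    lipU a ≤ √c :=
  csSup_le (ratioSet_nonempty a) fun _ => le_sqrt_of_mem_ratioSet hc

lemma sum_inner_sq_le_sum_norm_sq_mul (a : Fin m → E2) (u : E2) :
    ∑ j, ⟪a j, u⟫ ^ 2 ≤ (∑ j, ‖a j‖ ^ 2) * ‖u‖ ^ 2 := by
  rw [Finset.sum_mul]
  refine Finset.sum_le_sum fun j _ => ?_
  rw [← mul_pow, ← sq_abs]
  exact pow_le_pow_left₀ (abs_nonneg _) (abs_real_inner_le_norm _ _) 2

lemma sum_inner_sq_le_lipU_sq_mul (a : Fin m → E2) (u : E2) :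
    ∑ j, ⟪a j, u⟫ ^ 2 ≤ lipU a ^ 2 * ‖u‖ ^ 2 := by
  rcases eq_or_ne u 0 with rfl | hu
  · simp
  obtain ⟨r, hr, h⟩ := exists_mem_ratioSet a hu hu
  have hbdd : BddAbove (ratioSet a) :=
    ⟨_, fun _ => le_sqrt_of_mem_ratioSet (sum_inner_sq_le_sum_norm_sq_mul a)⟩
  rw [min_self, minEnergy_self] at h
  rw [← h]
  exact mul_le_mul_of_nonneg_right
    (pow_le_pow_left₀ (mem_ratioSet_iff.1 hr).1 (le_csSup hbdd hr) 2) (sq_nonneg _)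

end LipschitzConstants

section ComplexSquare

lemma vec2_apply_zero (x y : ℝ) : vec2 x y 0 = x := rfl

lemma vec2_apply_one (x y : ℝ) : vec2 x y 1 = y := rfl

lemma csq_apply_zero (v : E2) : csq v 0 = v 0 ^ 2 - v 1 ^ 2 := rfl

lemma csq_apply_one (v : E2) : csq v 1 = 2 * v 0 * v 1 := rfl

lemma inner_eq_apply_mul_apply (u v : E2) : ⟪u, v⟫ = u 0 * v 0 + u 1 * v 1 := by
  simp [PiLp.inner_apply, mul_comm]

lemma norm_sq_eq_apply_sq (v : E2) : ‖v‖ ^ 2 = v 0 ^ 2 + v 1 ^ 2 := by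
  rw [EuclideanSpace.real_norm_sq_eq, Fin.sum_univ_two]

lemma norm_csq (v : E2) : ‖csq v‖ = ‖v‖ ^ 2 := by
  rw [← sq_eq_sq₀ (norm_nonneg _) (sq_nonneg _), norm_sq_eq_apply_sq, norm_sq_eq_apply_sq,
    csq_apply_zero, csq_apply_one]
  ring

lemma two_mul_inner_sq (a u : E2) : 2 * ⟪a, u⟫ ^ 2 = ‖a‖ ^ 2 * ‖u‖ ^ 2 + ⟪csq a, csq u⟫ := by
  simp only [inner_eq_apply_mul_apply, norm_sq_eq_apply_sq, csq_apply_zero, csq_apply_one]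
  ring

lemma csq_surjective : Function.Surjective csq := by
  intro w
  obtain ⟨z, hz⟩ := IsAlgClosed.exists_pow_nat_eq (⟨w 0, w 1⟩ : ℂ) two_pos
  refine ⟨vec2 z.re z.im, ?_⟩
  ext i
  fin_cases i
  · simpa [csq_apply_zero, vec2_apply_zero, vec2_apply_one, sq] using congrArg Complex.re hz
  · have him := congrArg Complex.im hz
    simp only [sq, Complex.mul_im] at him
    simp only [Fin.mk_one, csq_apply_one, vec2_apply_zero, vec2_apply_one]
    linarith

lemma csq_smul (r : ℝ) (v : E2) : csq (r • v) = r ^ 2 • csq v := by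
  ext i
  fin_cases i
  · change (r * v 0) ^ 2 - (r * v 1) ^ 2 = r ^ 2 * (v 0 ^ 2 - v 1 ^ 2)
    ring
  · change 2 * (r * v 0) * (r * v 1) = r ^ 2 * (2 * v 0 * v 1)
    ring

lemma csq_vec2_cos_sin (θ : ℝ) : csq (vec2 (cos θ) (sin θ)) = vec2 (cos (2 * θ)) (sin (2 * θ)) := by
  ext i
  fin_cases i
  · exact (cos_two_mul' θ).symm
  · change 2 * cos θ * sin θ = sin (2 * θ)
    rw [sin_two_mul]
    ring

variable {m : ℕ} (a : Fin m → E2)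

lemma two_mul_sum_inner_sq (S : Finset (Fin m)) (u : E2) :
    2 * ∑ j ∈ S, ⟪a j, u⟫ ^ 2 =
      (∑ j ∈ S, ‖a j‖ ^ 2) * ‖u‖ ^ 2 + ⟪∑ j ∈ S, csq (a j), csq u⟫ := by
  simp only [Finset.mul_sum, Finset.sum_mul, sum_inner, two_mul_inner_sq, Finset.sum_add_distrib]

lemma norm_sum_csq_le (S : Finset (Fin m)) : ‖∑ j ∈ S, csq (a j)‖ ≤ ∑ j ∈ S, ‖a j‖ ^ 2 := by
  simpa only [norm_csq] using norm_sum_le S fun j => csq (a j)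

lemma sub_norm_mul_le_two_mul_sum_inner_sq (S : Finset (Fin m)) (u : E2) :
    (∑ j ∈ S, ‖a j‖ ^ 2 - ‖∑ j ∈ S, csq (a j)‖) * ‖u‖ ^ 2 ≤ 2 * ∑ j ∈ S, ⟪a j, u⟫ ^ 2 := by
  have hcs := neg_le_of_abs_le (abs_real_inner_le_norm (∑ j ∈ S, csq (a j)) (csq u))
  rw [norm_csq] at hcs
  rw [two_mul_sum_inner_sq]
  linarith

lemma minEnergy_le_sum_add_sum_compl (S : Finset (Fin m)) (u v : E2) :
    minEnergy a u v ≤ ∑ j ∈ S, ⟪a j, u⟫ ^ 2 + ∑ j ∈ Sᶜ, ⟪a j, v⟫ ^ 2 := by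
  rw [minEnergy, ← Finset.sum_add_sum_compl S]
  exact add_le_add (Finset.sum_le_sum fun _ _ => min_le_left _ _)
    (Finset.sum_le_sum fun _ _ => min_le_right _ _)

lemma exists_minEnergy_eq_sum_add_sum_compl (u v : E2) : ∃ S : Finset (Fin m),
    minEnergy a u v = ∑ j ∈ S, ⟪a j, u⟫ ^ 2 + ∑ j ∈ Sᶜ, ⟪a j, v⟫ ^ 2 := by
  refine ⟨Finset.univ.filter fun j => ⟪a j, u⟫ ^ 2 ≤ ⟪a j, v⟫ ^ 2, ?_⟩
  simp only [minEnergy, min_def, Finset.sum_ite, Finset.compl_filter]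

variable {a}

lemma sum_compl_csq (ha : ∑ j, csq (a j) = 0) (S : Finset (Fin m)) :
    ∑ j ∈ Sᶜ, csq (a j) = -∑ j ∈ S, csq (a j) :=
  eq_neg_of_add_eq_zero_right ((Finset.sum_add_sum_compl S _).trans ha)

lemma sum_inner_sq_of_sum_csq_eq_zero (ha : ∑ j, csq (a j) = 0) (u : E2) :
    ∑ j, ⟪a j, u⟫ ^ 2 = (∑ j, ‖a j‖ ^ 2) / 2 * ‖u‖ ^ 2 := by
  have h := two_mul_sum_inner_sq a Finset.univ u
  rw [ha, inner_zero_left] at h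
  linarith

lemma exists_minEnergy_le_of_sum_csq_eq_zero (ha : ∑ j, csq (a j) = 0) (S : Finset (Fin m)) :
    ∃ u v : E2, ‖u‖ = 1 ∧ ‖v‖ = 1 ∧
      minEnergy a u v ≤ (∑ j, ‖a j‖ ^ 2) / 2 - ‖∑ j ∈ S, csq (a j)‖ := by
  obtain ⟨w, hw, hSw⟩ : ∃ w : E2, ‖w‖ = 1 ∧
      ⟪∑ j ∈ S, csq (a j), w⟫ = -‖∑ j ∈ S, csq (a j)‖ := by
    rcases eq_or_ne (∑ j ∈ S, csq (a j)) 0 with hzero | hne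
    · obtain ⟨w, hw⟩ := exists_norm_eq E2 zero_le_one
      exact ⟨w, hw, by simp [hzero]⟩
    · refine ⟨-(‖∑ j ∈ S, csq (a j)‖⁻¹ • ∑ j ∈ S, csq (a j)), ?_, ?_⟩
      · rw [norm_neg, norm_smul, norm_inv, norm_norm, inv_mul_cancel₀ (norm_ne_zero_iff.2 hne)]
      · rw [inner_neg_right, real_inner_smul_right, real_inner_self_eq_norm_mul_norm,
          inv_mul_cancel_left₀ (norm_ne_zero_iff.2 hne)]
  obtain ⟨u, rfl⟩ := csq_surjective w
  obtain ⟨v, hv⟩ := csq_surjective (-csq u)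
  have hu_norm : ‖u‖ ^ 2 = 1 := by rw [← norm_csq, hw]
  have hv_norm : ‖v‖ ^ 2 = 1 := by rw [← norm_csq, hv, norm_neg, hw]
  refine ⟨u, v, (pow_eq_one_iff_of_nonneg (norm_nonneg u) two_ne_zero).1 hu_norm,
    (pow_eq_one_iff_of_nonneg (norm_nonneg v) two_ne_zero).1 hv_norm, ?_⟩
  have hSu := two_mul_sum_inner_sq a S u
  have hScv := two_mul_sum_inner_sq a Sᶜ v
  rw [hSw, hu_norm] at hSu
  rw [sum_compl_csq ha, hv, inner_neg_neg, hSw, hv_norm] at hScv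
  linarith [minEnergy_le_sum_add_sum_compl a S u v,
    Finset.sum_add_sum_compl S fun j => ‖a j‖ ^ 2]

lemma half_sub_mul_le_minEnergy (ha : ∑ j, csq (a j) = 0) {D : ℝ}
    (hD : ∀ S : Finset (Fin m), ‖∑ j ∈ S, csq (a j)‖ ≤ D) (u v : E2) :
    ((∑ j, ‖a j‖ ^ 2) / 2 - D) * min (‖u‖ ^ 2) (‖v‖ ^ 2) ≤ minEnergy a u v := by
  obtain ⟨S, hS⟩ := exists_minEnergy_eq_sum_add_sum_compl a u v
  have hSu := (mul_le_mul_of_nonneg_left (min_le_left (‖u‖ ^ 2) (‖v‖ ^ 2))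
    (sub_nonneg.2 (norm_sum_csq_le a S))).trans (sub_norm_mul_le_two_mul_sum_inner_sq a S u)
  have hScv := (mul_le_mul_of_nonneg_left (min_le_right (‖u‖ ^ 2) (‖v‖ ^ 2))
    (sub_nonneg.2 (norm_sum_csq_le a Sᶜ))).trans (sub_norm_mul_le_two_mul_sum_inner_sq a Sᶜ v)
  have hDS := mul_le_mul_of_nonneg_right (hD S)
    (le_min (sq_nonneg ‖u‖) (sq_nonneg ‖v‖))
  rw [sum_compl_csq ha, norm_neg] at hScv
  rw [hS, ← Finset.sum_add_sum_compl S]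
  linarith

lemma condNum_eq_of_sum_csq_eq_zero (ha : ∑ j, csq (a j) = 0) {P D : ℝ}
    (hP : ∑ j, ‖a j‖ ^ 2 = P)
    (hD : IsGreatest (Set.range fun S : Finset (Fin m) => ‖∑ j ∈ S, csq (a j)‖) D)
    (hPD : 2 * D < P) : condNum a = ENNReal.ofReal √(P / (P - 2 * D)) := by
  obtain ⟨⟨S, hS⟩, hDmax⟩ := hD
  obtain ⟨u, v, hu, hv, huv⟩ := exists_minEnergy_le_of_sum_csq_eq_zero ha S
  have hL : lipL a = √(P / 2 - D) := by
    refine le_antisymm (le_sqrt_of_sq_le ?_) (sqrt_le_lipL fun x y => ?_)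
    · have hle := (lipL_sq_mul_le_minEnergy a u v).trans huv
      rwa [hu, hv, one_pow, min_self, mul_one, hP, show ‖_‖ = D from hS] at hle
    · exact hP ▸ half_sub_mul_le_minEnergy ha (fun T => hDmax ⟨T, rfl⟩) x y
  have hU : lipU a = √(P / 2) := by
    refine le_antisymm (lipU_le_sqrt fun x => ?_) (sqrt_le_iff.2 ⟨lipU_nonneg a, ?_⟩)
    · rw [sum_inner_sq_of_sum_csq_eq_zero ha, hP]
    · simpa [sum_inner_sq_of_sum_csq_eq_zero ha, hP, hu] using sum_inner_sq_le_lipU_sq_mul a u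
  have hpos : 0 < P / 2 - D := by linarith
  rw [condNum, hL, hU, if_neg (sqrt_pos.2 hpos).ne', ← sqrt_div' _ hpos.le]
  congr 2
  have hne : P - 2 * D ≠ 0 := by linarith
  field_simp

end ComplexSquare

section ParsevalFrames

open Module in
lemma exists_linearMap_norm_comp_eq {V W : Type*} [NormedAddCommGroup V] [InnerProductSpace ℝ V]
    [FiniteDimensional ℝ V] [NormedAddCommGroup W] [InnerProductSpace ℝ W] {f : V →ₗ[ℝ] W}
    (hf : Function.Injective f) : ∃ T : V →ₗ[ℝ] V, ∀ u, ‖f (T u)‖ = ‖u‖ := by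
  let e : V ≃ₗ[ℝ] LinearMap.range f := LinearEquiv.ofInjective f hf
  let ι : V ≃ₗᵢ[ℝ] LinearMap.range f := (stdOrthonormalBasis ℝ V).equiv
    (stdOrthonormalBasis ℝ (LinearMap.range f)) (finCongr e.finrank_eq)
  refine ⟨e.symm.toLinearMap ∘ₗ ι.toLinearMap, fun u => ?_⟩
  have happly : f (e.symm (ι u)) = ι u := congrArg Subtype.val (e.apply_symm_apply (ι u))
  exact (congrArg norm happly).trans (ι.norm_map u)

variable {m : ℕ} {a c : Fin m → E2}

lemma exists_linearMap_sum_inner_sq_eq_norm_sq (ha : lipL a ≠ 0) :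
    ∃ T : E2 →ₗ[ℝ] E2, ∀ u, ∑ j, ⟪a j, T u⟫ ^ 2 = ‖u‖ ^ 2 := by
  let f : E2 →ₗ[ℝ] EuclideanSpace ℝ (Fin m) :=
    (WithLp.linearEquiv 2 ℝ (Fin m → ℝ)).symm.toLinearMap ∘ₗ LinearMap.pi fun j => innerₛₗ ℝ (a j)
  have hf_norm : ∀ u, ‖f u‖ ^ 2 = ∑ j, ⟪a j, u⟫ ^ 2 := fun u => by
    rw [EuclideanSpace.real_norm_sq_eq]; rfl
  have hf : Function.Injective f := (injective_iff_map_eq_zero f).2 fun u hu => by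
    have hle := lipL_sq_mul_le_minEnergy a u u
    rw [min_self, minEnergy_self, ← hf_norm, hu, norm_zero, zero_pow two_ne_zero] at hle
    by_contra hne
    exact hle.not_gt (by positivity)
  obtain ⟨T, hT⟩ := exists_linearMap_norm_comp_eq hf
  exact ⟨T, fun u => by rw [← hf_norm, hT]⟩

lemma two_mul_norm_sq_of_parseval (hc : ∀ u, ∑ j, ⟪c j, u⟫ ^ 2 = ‖u‖ ^ 2) (u : E2) :
    2 * ‖u‖ ^ 2 = (∑ j, ‖c j‖ ^ 2) * ‖u‖ ^ 2 + ⟪∑ j, csq (c j), csq u⟫ := by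
  rw [← hc, two_mul_sum_inner_sq, hc]

lemma sum_csq_eq_zero_of_parseval (hc : ∀ u, ∑ j, ⟪c j, u⟫ ^ 2 = ‖u‖ ^ 2) :
    ∑ j, csq (c j) = 0 := by
  obtain ⟨u, hu⟩ := csq_surjective (∑ j, csq (c j))
  obtain ⟨v, hv⟩ := csq_surjective (-∑ j, csq (c j))
  have huv : ‖u‖ ^ 2 = ‖v‖ ^ 2 := by rw [← norm_csq, hu, ← norm_csq, hv, norm_neg]
  have hu_eq := two_mul_norm_sq_of_parseval hc u
  have hv_eq := two_mul_norm_sq_of_parseval hc v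
  rw [hu] at hu_eq
  rw [hv, inner_neg_right, ← huv] at hv_eq
  exact inner_self_eq_zero.1 (by linarith : ⟪∑ j, csq (c j), ∑ j, csq (c j)⟫ = 0)

lemma sum_norm_sq_eq_two_of_parseval (hc : ∀ u, ∑ j, ⟪c j, u⟫ ^ 2 = ‖u‖ ^ 2) :
    ∑ j, ‖c j‖ ^ 2 = 2 := by
  obtain ⟨u, hu⟩ := exists_norm_eq E2 zero_le_one
  have h := two_mul_norm_sq_of_parseval hc u
  rw [sum_csq_eq_zero_of_parseval hc, inner_zero_left, hu] at h
  linarith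

lemma exists_lipL_sq_le_lipU_sq_mul (ha : lipL a ≠ 0) :
    ∃ c : Fin m → E2, ∑ j, csq (c j) = 0 ∧ ∑ j, ‖c j‖ ^ 2 = 2 ∧
      ∀ S : Finset (Fin m), lipL a ^ 2 ≤ lipU a ^ 2 * (1 - ‖∑ j ∈ S, csq (c j)‖) := by
  obtain ⟨T, hT⟩ := exists_linearMap_sum_inner_sq_eq_norm_sq ha
  have hinner : ∀ j u, ⟪T.adjoint (a j), u⟫ = ⟪a j, T u⟫ := fun j u => T.adjoint_inner_left u (a j)
  have hparseval : ∀ u, ∑ j, ⟪T.adjoint (a j), u⟫ ^ 2 = ‖u‖ ^ 2 := by simpa only [hinner] using hT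
  have hzero := sum_csq_eq_zero_of_parseval hparseval
  have htwo := sum_norm_sq_eq_two_of_parseval hparseval
  refine ⟨fun j => T.adjoint (a j), hzero, htwo, fun S => ?_⟩
  obtain ⟨u, v, hu, hv, huv⟩ := exists_minEnergy_le_of_sum_csq_eq_zero hzero S
  rw [htwo, div_self two_ne_zero] at huv
  have hU : ∀ x, ‖x‖ = 1 → 1 ≤ lipU a ^ 2 * ‖T x‖ ^ 2 := fun x hx => by
    simpa [hT, hx] using sum_inner_sq_le_lipU_sq_mul a (T x)
  have hmin : 1 ≤ lipU a ^ 2 * min (‖T u‖ ^ 2) (‖T v‖ ^ 2) := by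
    rw [mul_min_of_nonneg _ _ (sq_nonneg _)]
    exact le_min (hU u hu) (hU v hv)
  have hL : lipL a ^ 2 * min (‖T u‖ ^ 2) (‖T v‖ ^ 2) ≤ 1 - ‖∑ j ∈ S, csq (T.adjoint (a j))‖ := by
    refine (lipL_sq_mul_le_minEnergy a (T u) (T v)).trans ?_
    simpa only [minEnergy, hinner] using huv
  calc lipL a ^ 2 ≤ lipL a ^ 2 * (lipU a ^ 2 * min (‖T u‖ ^ 2) (‖T v‖ ^ 2)) :=
        le_mul_of_one_le_right (sq_nonneg _) hmin
    _ = lipU a ^ 2 * (lipL a ^ 2 * min (‖T u‖ ^ 2) (‖T v‖ ^ 2)) := by ring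
    _ ≤ _ := mul_le_mul_of_nonneg_left hL (sq_nonneg _)

lemma sqrt_div_sub_two_le_condNum {κ : ℝ} (hκ : 2 < κ)
    (hsubset : ∀ b : Fin m → E2, ∑ j, b j = 0 →
      ∃ S : Finset (Fin m), ∑ j, ‖b j‖ ≤ κ * ‖∑ j ∈ S, b j‖) (a : Fin m → E2) :
    ENNReal.ofReal √(κ / (κ - 2)) ≤ condNum a := by
  rw [condNum]
  split_ifs with hL
  · exact le_top
  have hL_pos : 0 < lipL a := (lipL_nonneg a).lt_of_ne' hL
  refine ENNReal.ofReal_le_ofReal ((le_div_iff₀ hL_pos).2 ?_)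
  obtain ⟨c, hzero, htwo, hc⟩ := exists_lipL_sq_le_lipU_sq_mul hL
  obtain ⟨S, hS⟩ := hsubset _ hzero
  simp only [norm_csq, htwo] at hS
  have hκL : κ * lipL a ^ 2 ≤ (κ - 2) * lipU a ^ 2 := by
    calc κ * lipL a ^ 2 ≤ κ * (lipU a ^ 2 * (1 - ‖∑ j ∈ S, csq (c j)‖)) :=
          mul_le_mul_of_nonneg_left (hc S) (by linarith)
      _ = (κ - κ * ‖∑ j ∈ S, csq (c j)‖) * lipU a ^ 2 := by ring
      _ ≤ (κ - 2) * lipU a ^ 2 :=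
          mul_le_mul_of_nonneg_right (by linarith) (sq_nonneg _)
  refine le_of_sq_le_sq ?_ (lipU_nonneg a)
  rw [mul_pow, sq_sqrt (div_nonneg (by linarith) (by linarith)), div_mul_eq_mul_div,
    div_le_iff₀ (by linarith), mul_comm (lipU a ^ 2)]
  exact hκL

end ParsevalFrames

section Examples

lemma smul_vec2 (r x y : ℝ) : r • vec2 x y = vec2 (r * x) (r * y) := by
  ext i
  fin_cases i <;> rfl

lemma norm_vec2_cos_sin (θ : ℝ) : ‖vec2 (cos θ) (sin θ)‖ = 1 := by
  rw [← pow_eq_one_iff_of_nonneg (norm_nonneg _) two_ne_zero, norm_sq_eq_apply_sq]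
  exact cos_sq_add_sin_sq θ

lemma norm_sum_le_of_sum_sq_le {ι : Type*} {b : ι → E2} {S : Finset ι} {D : ℝ} (hD : 0 ≤ D)
    (h : (∑ i ∈ S, b i 0) ^ 2 + (∑ i ∈ S, b i 1) ^ 2 ≤ D ^ 2) : ‖∑ i ∈ S, b i‖ ≤ D := by
  refine le_of_sq_le_sq ?_ hD
  simpa [norm_sq_eq_apply_sq] using h

lemma sum_fin_four_eq_sum_ite (f : Fin 4 → ℝ) (S : Finset (Fin 4)) :
    ∑ i ∈ S, f i = (if 0 ∈ S then f 0 else 0) + (if 1 ∈ S then f 1 else 0) +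
      (if 2 ∈ S then f 2 else 0) + (if 3 ∈ S then f 3 else 0) := by
  rw [← Fin.sum_univ_four fun i => if i ∈ S then f i else 0, Finset.sum_ite_mem,
    Finset.univ_inter]

lemma csq_harmonicFrame_four (j : Fin 4) :
    csq (harmonicFrame 4 j) = ![vec2 1 0, vec2 0 1, vec2 (-1) 0, vec2 0 (-1)] j := by
  rw [harmonicFrame, csq_vec2_cos_sin]
  fin_cases j
  · simp
  · simp [show 2 * (π / 4) = π / 2 by ring]
  · simp [show 2 * (2 * π / 4) = π by ring]
  · simp [show 2 * (3 * π / 4) = π / 2 + π by ring, cos_add_pi, sin_add_pi]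

lemma isGreatest_norm_sum_csq_harmonicFrame_four :
    IsGreatest (Set.range fun S : Finset (Fin 4) => ‖∑ j ∈ S, csq (harmonicFrame 4 j)‖) √2 := by
  simp only [csq_harmonicFrame_four]
  constructor
  · refine ⟨{0, 1}, ?_⟩
    simp [EuclideanSpace.norm_eq, vec2_apply_zero, vec2_apply_one, one_add_one_eq_two]
  · rintro _ ⟨S, rfl⟩
    refine norm_sum_le_of_sum_sq_le (sqrt_nonneg _) ?_
    rw [sq_sqrt zero_le_two, sum_fin_four_eq_sum_ite, sum_fin_four_eq_sum_ite]
    simp only [Matrix.cons_val, vec2_apply_zero, vec2_apply_one]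
    split_ifs <;> norm_num

lemma condNum_harmonicFrame_four : condNum (harmonicFrame 4) = ENNReal.ofReal √(2 + √2) := by
  have hzero : ∑ j, csq (harmonicFrame 4 j) = 0 := by
    simp only [csq_harmonicFrame_four]
    ext i
    fin_cases i <;> simp [Fin.sum_univ_four, vec2_apply_zero, vec2_apply_one]
  have hnorm : ∑ j, ‖harmonicFrame 4 j‖ ^ 2 = 4 := by
    simp [harmonicFrame, norm_vec2_cos_sin]
  have hlt : 2 * √2 < 4 := by nlinarith [sq_sqrt (zero_le_two (α := ℝ)), sqrt_nonneg (2 : ℝ)]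
  rw [condNum_eq_of_sum_csq_eq_zero hzero hnorm isGreatest_norm_sum_csq_harmonicFrame_four hlt]
  congr 2
  rw [div_eq_iff (by linarith)]
  linarith [mul_self_sqrt (zero_le_two (α := ℝ))]

lemma norm_sq_E4' (j : Fin 4) :
    ‖E4' j‖ ^ 2 = ![1, 1, 2 * sin (π / 12), 2 * sin (π / 12)] j := by
  have hsin : 0 ≤ sin (π / 12) := by linarith [one_fourth_le_sin_pi_div_twelve]
  fin_cases j
  · simp [E4', norm_sq_eq_apply_sq, vec2_apply_zero, vec2_apply_one]
  · simp [E4', norm_vec2_cos_sin]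
  · simp [E4', norm_vec2_cos_sin, norm_smul, mul_pow, sq_sqrt hsin]
  · simp [E4', norm_vec2_cos_sin, norm_smul, mul_pow, sq_sqrt hsin]

lemma csq_E4' (j : Fin 4) : csq (E4' j) = ![vec2 1 0, vec2 (-1 / 2) (-√3 / 2),
    vec2 (-(√3 - 1) / 2) ((√3 - 1) / 2), vec2 (√3 / 2 - 1) (1 / 2)] j := by
  have hsin : 0 ≤ 2 * sin (π / 12) := by linarith [one_fourth_le_sin_pi_div_twelve]
  have h2 : √2 ^ 2 = 2 := sq_sqrt zero_le_two
  fin_cases j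
  · ext i
    fin_cases i <;> simp [E4', csq_apply_zero, csq_apply_one, vec2_apply_zero, vec2_apply_one]
  · change csq (vec2 (cos (2 * π / 3)) (sin (2 * π / 3))) = vec2 (-1 / 2) (-√3 / 2)
    rw [csq_vec2_cos_sin, show 2 * (2 * π / 3) = π / 3 + π by ring, cos_add_pi, sin_add_pi,
      cos_pi_div_three, sin_pi_div_three, neg_div, neg_div]
  · change csq (√(2 * sin (π / 12)) • vec2 (cos (3 * π / 8)) (sin (3 * π / 8))) =
      vec2 (-(√3 - 1) / 2) ((√3 - 1) / 2)
    have hscale : 2 * sin (π / 12) * (√2 / 2) = (√3 - 1) / 2 := by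
      rw [sin_pi_div_twelve, sqrt_six_eq_sqrt_two_mul_sqrt_three]
      linear_combination (√3 - 1) / 4 * h2
    rw [csq_smul, csq_vec2_cos_sin, show 2 * (3 * π / 8) = π - π / 4 by ring, cos_pi_sub,
      sin_pi_sub, cos_pi_div_four, sin_pi_div_four, sq_sqrt hsin, smul_vec2, mul_neg, hscale,
      neg_div]
  · change csq (√(2 * sin (π / 12)) • vec2 (cos (7 * π / 24)) (sin (7 * π / 24))) =
      vec2 (√3 / 2 - 1) (1 / 2)
    have hsin_mul : 2 * sin (π / 12) * -sin (π / 12) = √3 / 2 - 1 := by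
      have hcos : √3 / 2 = 1 - 2 * sin (π / 12) ^ 2 := by
        rw [← cos_pi_div_six, ← cos_two_mul_eq_one_sub]
        ring_nf
      rw [hcos]
      ring
    have hcos_mul : 2 * sin (π / 12) * cos (π / 12) = 1 / 2 := by
      rw [← sin_two_mul, show 2 * (π / 12) = π / 6 by ring, sin_pi_div_six]
    rw [csq_smul, csq_vec2_cos_sin, show 2 * (7 * π / 24) = π / 12 + π / 2 by ring,
      cos_add_pi_div_two, sin_add_pi_div_two, sq_sqrt hsin, smul_vec2, hsin_mul, hcos_mul]

lemma isGreatest_norm_sum_csq_E4' :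
    IsGreatest (Set.range fun S : Finset (Fin 4) => ‖∑ j ∈ S, csq (E4' j)‖) 1 := by
  have h3 : √3 ^ 2 = 3 := sq_sqrt zero_le_three
  have hlower : 1.7 < √3 := lt_sqrt_of_sq_lt (by norm_num)
  have hupper : √3 < 1.8 := (sqrt_lt' (by norm_num)).2 (by norm_num)
  constructor
  · exact ⟨{0}, by simp [norm_csq, norm_sq_E4']⟩
  · rintro _ ⟨S, rfl⟩
    simp only [csq_E4']
    refine norm_sum_le_of_sum_sq_le zero_le_one ?_
    rw [sum_fin_four_eq_sum_ite, sum_fin_four_eq_sum_ite]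
    simp only [Matrix.cons_val, vec2_apply_zero, vec2_apply_one]
    split_ifs <;> nlinarith

lemma two_add_div_four_mul_sin_pi_div_twelve :
    (2 + 4 * sin (π / 12)) / (4 * sin (π / 12)) = 1 + √2 / 2 + √6 / 2 := by
  have h2 : √2 ^ 2 = 2 := sq_sqrt zero_le_two
  have h6 : √6 ^ 2 = 6 := sq_sqrt (by norm_num)
  rw [div_eq_iff (by linarith [one_fourth_le_sin_pi_div_twelve]), sin_pi_div_twelve]
  nlinarith

lemma condNum_E4' : condNum E4' = ENNReal.ofReal √(1 + √2 / 2 + √6 / 2) := by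
  have hzero : ∑ j, csq (E4' j) = 0 := by
    simp only [csq_E4']
    ext i
    fin_cases i <;>
      simp only [Fin.sum_univ_four, Matrix.cons_val, PiLp.add_apply, PiLp.zero_apply, Fin.zero_eta,
        Fin.mk_one, vec2_apply_zero, vec2_apply_one] <;> ring
  have hnorm : ∑ j, ‖E4' j‖ ^ 2 = 2 + 4 * sin (π / 12) := by
    simp only [norm_sq_E4', Fin.sum_univ_four, Matrix.cons_val]
    ring
  rw [condNum_eq_of_sum_csq_eq_zero hzero hnorm isGreatest_norm_sum_csq_E4'
    (by linarith [one_fourth_le_sin_pi_div_twelve]), mul_one, add_sub_cancel_left,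
    two_add_div_four_mul_sin_pi_div_twelve]

lemma sqrt_le_condNum_fin_four (a : Fin 4 → E2) :
    ENNReal.ofReal √(1 + √2 / 2 + √6 / 2) ≤ condNum a := by
  have hκ : 2 < 2 + 4 * sin (π / 12) := by linarith [one_fourth_le_sin_pi_div_twelve]
  have h := sqrt_div_sub_two_le_condNum hκ
    (fun b hb => exists_sum_norm_le_mul_norm_sum (finrank_euclideanSpace_fin (𝕜 := ℝ)).le hb) a
  rwa [add_sub_cancel_left, two_add_div_four_mul_sin_pi_div_twelve] at h

end Examples

/-- `β_{E_4'} = min_M β_M = √(1 + √2/2 + √6/2)`, while the harmonic frame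
`E_4` has `β_{E_4} = √(2 + √2) > β_{E_4'}`. -/
theorem stmt11 :
    condNum E4' = ⨅ M : Fin 4 → E2, condNum M ∧
    condNum E4' = ENNReal.ofReal (Real.sqrt (1 + Real.sqrt 2 / 2 + Real.sqrt 6 / 2)) ∧
    condNum (harmonicFrame 4) = ENNReal.ofReal (Real.sqrt (2 + Real.sqrt 2)) ∧
    condNum E4' < condNum (harmonicFrame 4) := by
  refine ⟨le_antisymm (le_iInf fun M => ?_) (iInf_le _ _), condNum_E4',
    condNum_harmonicFrame_four, ?_⟩
  · rw [condNum_E4']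
    exact sqrt_le_condNum_fin_four M
  · rw [condNum_E4', condNum_harmonicFrame_four, ENNReal.ofReal_lt_ofReal_iff (by positivity)]
    have h6 : √6 < 2 + √2 := by
      rw [sqrt_lt' (by positivity)]
      nlinarith [sq_sqrt (zero_le_two (α := ℝ)), sqrt_pos.2 (zero_lt_two (α := ℝ))]
    exact sqrt_lt_sqrt (by positivity) (by linarith)
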